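/- Let (M,d) be a complete pointed metric space which is 0-hyperbolic and purely 1-unrectifiable. Then for every sequence (μ_n) of finitely supported functions μ_n : M → ℝ with sup_n ‖μ_n‖ < ∞ (free norm), one has ca(μ_n) ≤ de(μ_n). (This is equivalent to the Lipschitz-free space F(M) being 1-Schur, since finitely supported elements are dense.) -/

import Mathlib

open scoped BigOperators

/-- The free norm of a finitely supported function `μ : M → ℝ` over a pointed metric
space `(M, z)`. -/
noncomputable def freeNorm {M : Type*} [MetricSpace M] (z : M) (μ : M →₀ ℝ) : ℝ :=
  sSup {s | ∃ f : M → ℝ, f z = 0 ∧ LipschitzWith 1 f ∧ s = ∑ x ∈ μ.support, μ x * f x}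

/-- `ca(μ_n) = inf_n sup {‖μ_k - μ_l‖ : k, l ≥ n}` computed with the free norm. -/
noncomputable def seqCa {M : Type*} [MetricSpace M] (z : M) (μ : ℕ → M →₀ ℝ) : ℝ :=
  sInf {t | ∃ n : ℕ, t = sSup {s | ∃ k, n ≤ k ∧ ∃ l, n ≤ l ∧ s = freeNorm z (μ k - μ l)}}

/-- `de(μ_n) = sup_f inf_n sup {|⟨μ_k - μ_l, f⟩| : k, l ≥ n}` over `1`-Lipschitz `f`
vanishing at the base point. -/
noncomputable def seqDe {M : Type*} [MetricSpace M] (z : M) (μ : ℕ → M →₀ ℝ) : ℝ :=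
  sSup {t | ∃ f : M → ℝ, f z = 0 ∧ LipschitzWith 1 f ∧
    t = sInf {u | ∃ n : ℕ, u = sSup {s | ∃ k, n ≤ k ∧ ∃ l, n ≤ l ∧
      s = |∑ x ∈ (μ k - μ l).support, (μ k - μ l) x * f x|}}}

/-- `M` is purely `1`-unrectifiable: there is no compact `K ⊆ ℝ` of positive Lebesgue
measure admitting a bi-Lipschitz embedding into `M`. -/
def PurelyOneUnrectifiable (M : Type*) [MetricSpace M] : Prop :=
  ¬ ∃ K : Set ℝ, IsCompact K ∧ 0 < MeasureTheory.volume K ∧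
      ∃ C : ℝ, 0 < C ∧ ∃ φ : ℝ → M, ∀ s ∈ K, ∀ t ∈ K,
        C⁻¹ * |s - t| ≤ dist (φ s) (φ t) ∧ dist (φ s) (φ t) ≤ C * |s - t|

open MeasureTheory Filter Topology


/-- Gromov product. -/
noncomputable def gp {M : Type*} [MetricSpace M] (z x y : M) : ℝ :=
  (dist z x + dist z y - dist x y) / 2

section tree
variable {M : Type*} [MetricSpace M] (z : M)

lemma gp_comm (x y : M) : gp z x y = gp z y x := by
  unfold gp; rw [dist_comm x y]; ring

lemma gp_nonneg (x y : M) : 0 ≤ gp z x y := by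
  unfold gp
  have := dist_triangle_left x y z
  linarith

lemma gp_le_left (x y : M) : gp z x y ≤ dist z x := by
  unfold gp
  have := dist_triangle z x y
  linarith

lemma gp_le_right (x y : M) : gp z x y ≤ dist z y := by
  rw [gp_comm]; exact gp_le_left z y x

lemma gp_self (x : M) : gp z x x = dist z x := by
  unfold gp; simp

lemma gp_base (x : M) : gp z z x = 0 := by
  unfold gp; simp

lemma dist_eq_gp (x y : M) : dist x y = dist z x + dist z y - 2 * gp z x y := by
  unfold gp; ring

/-- The ultrametric inequality for Gromov products. -/
def UGp : Prop := ∀ x y w : M, min (gp z x y) (gp z y w) ≤ gp z x w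

lemma ugp_of_hyp (hhyp : ∀ x y u v : M,
      dist x y + dist u v ≤ max (dist x u + dist y v) (dist x v + dist y u)) : UGp z := by
  intro x y w
  have h := hhyp x w y z
  unfold gp
  rw [dist_comm y z, dist_comm w z, dist_comm x z, dist_comm w y] at h
  rcases le_max_iff.1 h with h | h
  · exact (min_le_left _ _).trans (by linarith)
  · exact (min_le_right _ _).trans (by linarith)

variable {z}

lemma UGp.trans_le (hu : UGp z) {x y w : M} {t : ℝ} (h1 : t ≤ gp z x y) (h2 : t ≤ gp z y w) :
    t ≤ gp z x w := (le_min h1 h2).trans (hu x y w)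

lemma measSet_nat_prod {E : Set (ℕ × ℝ)} (h : ∀ n, MeasurableSet {t : ℝ | (n, t) ∈ E}) :
    MeasurableSet E := by
  have : E = ⋃ n : ℕ, ({n} : Set ℕ) ×ˢ {t : ℝ | (n, t) ∈ E} := by
    ext ⟨n, t⟩; simp
  rw [this]
  exact MeasurableSet.iUnion fun n => (measurableSet_singleton n).prod (h n)

variable (z)

/-- The domain of the tree measure. -/
def Om (x : ℕ → M) : Set (ℕ × ℝ) :=
  {p | 0 < p.2 ∧ p.2 ≤ dist z (x p.1) ∧ ∀ i < p.1, gp z (x i) (x p.1) < p.2}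

lemma measSet_Om (x : ℕ → M) : MeasurableSet (Om z x) := by
  apply measSet_nat_prod
  intro n
  have : {t : ℝ | (n, t) ∈ Om z x} = Set.Ioc 0 (dist z (x n)) ∩
      ⋂ i : ℕ, ⋂ (_ : i < n), Set.Ioi (gp z (x i) (x n)) := by
    ext t; simp [Om, and_assoc]
  rw [this]
  exact measurableSet_Ioc.inter
    (MeasurableSet.iInter fun i => MeasurableSet.iInter fun _ => measurableSet_Ioi)

/-- The tree (length) measure. -/
noncomputable def lam (x : ℕ → M) : Measure (ℕ × ℝ) :=
  ((Measure.count : Measure ℕ).prod (volume : Measure ℝ)).restrict (Om z x)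

/-- The points beyond. -/
def Bey (x : ℕ → M) (y : M) : Set (ℕ × ℝ) := {p | p.2 ≤ gp z y (x p.1)}

lemma measSet_Bey (x : ℕ → M) (y : M) : MeasurableSet (Bey z x y) := by
  apply measSet_nat_prod
  intro n
  exact (measurableSet_Iic : MeasurableSet (Set.Iic (gp z y (x n))))

variable {z}

lemma bey_unique (hu : UGp z) {x : ℕ → M} {y : M} {n m : ℕ} {t : ℝ}
    (hn : (n, t) ∈ Om z x) (hm : (m, t) ∈ Om z x) (hn' : (n, t) ∈ Bey z x y)
    (hm' : (m, t) ∈ Bey z x y) : n = m := by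
  have key : ∀ a b : ℕ, (b, t) ∈ Om z x → (a, t) ∈ Bey z x y → (b, t) ∈ Bey z x y → ¬ a < b := by
    intro a b hb ha' hb' hab
    have h1 := hb.2.2 a hab
    have h2 : t ≤ gp z (x a) (x b) :=
      hu.trans_le (y := y) (by rw [gp_comm]; exact ha') hb'
    simp only at h1
    linarith
  rcases lt_trichotomy n m with h | h | h
  · exact absurd h (key _ _ hm hn' hm')
  · exact h
  · exact absurd h (key _ _ hn hm' hn')

lemma lam_diff_le (hu : UGp z) (x : ℕ → M) (y w : M) :
    lam z x (Bey z x y \ Bey z x w) ≤ ENNReal.ofReal (dist z y - gp z y w) := by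
  have hE : MeasurableSet (Bey z x y \ Bey z x w) := (measSet_Bey z x y).diff (measSet_Bey z x w)
  rw [lam, Measure.restrict_apply hE, Measure.prod_apply_symm (hE.inter (measSet_Om z x))]
  calc ∫⁻ t, Measure.count ((fun n : ℕ => (n, t)) ⁻¹' ((Bey z x y \ Bey z x w) ∩ Om z x))
      ≤ ∫⁻ t, (Set.Ioc (gp z y w) (dist z y)).indicator 1 t := by
        apply lintegral_mono
        intro t
        by_cases hne : ((fun n : ℕ => (n, t)) ⁻¹' ((Bey z x y \ Bey z x w) ∩ Om z x)).Nonempty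
        · obtain ⟨n, hn⟩ := hne
          obtain ⟨⟨h1, h2⟩, h3⟩ := hn
          have ht : t ∈ Set.Ioc (gp z y w) (dist z y) := by
            constructor
            · by_contra hlt
              push Not at hlt
              apply h2
              change t ≤ gp z w (x n)
              exact hu.trans_le (y := y) (by rw [gp_comm]; exact hlt) h1
            · exact le_trans h1 (gp_le_left z y (x n))
          have hs : ((fun n : ℕ => (n, t)) ⁻¹' ((Bey z x y \ Bey z x w) ∩ Om z x)) = {n} := by
            ext m
            constructor
            · rintro ⟨⟨h1', h2'⟩, h3'⟩
              exact bey_unique hu h3' h3 h1' h1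
            · rintro rfl
              exact ⟨⟨h1, h2⟩, h3⟩
          simp only [hs]
          simp [ht]
        · rw [Set.not_nonempty_iff_eq_empty] at hne
          simp only [hne]
          simp
    _ = ENNReal.ofReal (dist z y - gp z y w) := by
        rw [lintegral_indicator_one measurableSet_Ioc, Real.volume_Ioc]

/-- indicator of the points below `y`. -/
noncomputable def ee (z : M) (x : ℕ → M) (y : M) : ℕ × ℝ → ℝ := (Bey z x y).indicator 1

lemma ee_ae_base (x : ℕ → M) : ee z x z =ᵐ[lam z x] 0 := by
  rw [lam]
  filter_upwards [ae_restrict_mem (measSet_Om z x)] with p hp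
  have : p ∉ Bey z x z := by
    intro h
    have : p.2 ≤ gp z z (x p.1) := h
    rw [gp_base] at this
    exact absurd hp.1 (not_lt.2 this)
  simp [ee, this]

lemma measurable_ee (x : ℕ → M) (y : M) : Measurable (ee z x y) :=
  measurable_one.indicator (measSet_Bey z x y)

lemma lam_bey_lt_top (hu : UGp z) (x : ℕ → M) (y : M) : lam z x (Bey z x y) < ⊤ := by
  have h0 : lam z x (Bey z x z) = 0 := by
    rw [lam, Measure.restrict_apply (measSet_Bey z x z)]
    convert measure_empty (μ := ((Measure.count : Measure ℕ).prod (volume : Measure ℝ)))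
    ext p
    simp only [Set.mem_inter_iff, Set.mem_empty_iff_false, iff_false, not_and]
    intro h hp
    have : p.2 ≤ gp z z (x p.1) := h
    rw [gp_base] at this
    exact absurd hp.1 (not_lt.2 this)
  have := lam_diff_le hu x y z
  rw [measure_sdiff_null h0] at this
  exact this.trans_lt ENNReal.ofReal_lt_top

lemma integrable_ee (hu : UGp z) (x : ℕ → M) (y : M) : Integrable (ee z x y) (lam z x) := by
  unfold ee
  rw [integrable_indicator_iff (measSet_Bey z x y)]
  exact integrableOn_const (lam_bey_lt_top hu x y).ne

lemma integral_abs_ee_sub (hu : UGp z) (x : ℕ → M) (y w : M) :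
    ∫ p, |ee z x y p - ee z x w p| ∂(lam z x) ≤ dist y w := by
  have hb : ∀ y w, MeasurableSet (Bey z x y \ Bey z x w) := fun y w =>
    (measSet_Bey z x y).diff (measSet_Bey z x w)
  have hfin : ∀ y w, lam z x (Bey z x y \ Bey z x w) ≠ ⊤ := fun y w =>
    ((lam_diff_le hu x y w).trans_lt ENNReal.ofReal_lt_top).ne
  have h1 : (fun p => |ee z x y p - ee z x w p|) =
      fun p => (Bey z x y \ Bey z x w).indicator 1 p + (Bey z x w \ Bey z x y).indicator 1 p := by
    funext p
    by_cases h1 : p ∈ Bey z x y <;> by_cases h2 : p ∈ Bey z x w <;> simp [ee, h1, h2]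
  have hr : ∀ y w, (lam z x).real (Bey z x y \ Bey z x w) ≤ dist z y - gp z y w := fun y w =>
    ENNReal.toReal_le_of_le_ofReal (by linarith [gp_le_left z y w]) (lam_diff_le hu x y w)
  rw [h1, integral_add, integral_indicator_one (hb _ _), integral_indicator_one (hb _ _)]
  · have a := hr y w
    have b := hr w y
    rw [gp_comm z w y] at b
    rw [dist_eq_gp z y w]
    linarith
  · rw [integrable_indicator_iff (hb _ _)]
    exact integrableOn_const (hfin y w)
  · rw [integrable_indicator_iff (hb _ _)]
    exact integrableOn_const (hfin w y)

/-- The function with derivative `g`. -/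
noncomputable def fg (z : M) (x : ℕ → M) (g : ℕ × ℝ → ℝ) (y : M) : ℝ :=
  ∫ p, ee z x y p * g p ∂(lam z x)

lemma integrable_ee_mul (hu : UGp z) (x : ℕ → M) (y : M) {g : ℕ × ℝ → ℝ} (hg : Measurable g)
    (hg1 : ∀ p, |g p| ≤ 1) : Integrable (fun p => ee z x y p * g p) (lam z x) :=
  (integrable_ee hu x y).mul_bdd (c := 1) hg.aestronglyMeasurable
    (Eventually.of_forall hg1)

lemma fg_base (x : ℕ → M) (g : ℕ × ℝ → ℝ) : fg z x g z = 0 := by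
  unfold fg
  rw [integral_eq_zero_of_ae]
  filter_upwards [ee_ae_base (z := z) x] with p hp
  simp [hp]

lemma fg_lip (hu : UGp z) (x : ℕ → M) {g : ℕ × ℝ → ℝ} (hg : Measurable g)
    (hg1 : ∀ p, |g p| ≤ 1) : LipschitzWith 1 (fg z x g) := by
  apply LipschitzWith.of_dist_le_mul
  intro y w
  rw [NNReal.coe_one, one_mul, Real.dist_eq]
  refine le_trans ?_ (integral_abs_ee_sub hu x y w)
  unfold fg
  rw [← integral_sub (integrable_ee_mul hu x y hg hg1) (integrable_ee_mul hu x w hg hg1)]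
  refine abs_integral_le_integral_abs.trans ?_
  apply integral_mono
  · exact ((integrable_ee_mul hu x y hg hg1).sub (integrable_ee_mul hu x w hg hg1)).abs
  · exact ((integrable_ee hu x y).sub (integrable_ee hu x w)).abs
  · intro p
    change |ee z x y p * g p - ee z x w p * g p| ≤ |ee z x y p - ee z x w p|
    rw [← sub_mul, abs_mul]
    exact mul_le_of_le_one_right (abs_nonneg _) (hg1 p)

/-- The density of `ν`. -/
noncomputable def FF (z : M) (x : ℕ → M) (ν : M →₀ ℝ) (p : ℕ × ℝ) : ℝ :=
  ∑ y ∈ ν.support, ν y * ee z x y p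

lemma measurable_FF (x : ℕ → M) (ν : M →₀ ℝ) : Measurable (FF z x ν) := by
  unfold FF
  exact Finset.measurable_fun_sum _ fun y _ => (measurable_ee x y).const_mul _

lemma integrable_FF (hu : UGp z) (x : ℕ → M) (ν : M →₀ ℝ) : Integrable (FF z x ν) (lam z x) := by
  unfold FF
  exact integrable_finsetSum _ fun y _ => (integrable_ee hu x y).const_mul _

lemma pair_fg (hu : UGp z) (x : ℕ → M) (ν : M →₀ ℝ) {g : ℕ × ℝ → ℝ} (hg : Measurable g)
    (hg1 : ∀ p, |g p| ≤ 1) :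
    ∑ y ∈ ν.support, ν y * fg z x g y = ∫ p, FF z x ν p * g p ∂(lam z x) := by
  unfold fg FF
  simp_rw [Finset.sum_mul, mul_assoc]
  rw [integral_finsetSum]
  · simp_rw [integral_const_mul]
  · intro y _
    exact (integrable_ee_mul hu x y hg hg1).const_mul _

end tree

section ext
variable {M : Type*} [MetricSpace M] {z : M}

/-- Distance from `y` to the point at height `t` on the segment from the base to `x n`. -/
noncomputable def EE (z : M) (x : ℕ → M) (n : ℕ) (y : M) (t : ℝ) : ℝ :=
  dist z y - gp z y (x n) + |t - gp z y (x n)|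

/-- Extension of `f` to the tree. -/
noncomputable def ft (z : M) (x : ℕ → M) (f : M → ℝ) (n : ℕ) (t : ℝ) : ℝ :=
  ⨅ y : M, (f y + EE z x n y t)

lemma EE_ge (x : ℕ → M) (n : ℕ) (y : M) (t : ℝ) : dist z y - t ≤ EE z x n y t := by
  unfold EE
  linarith [neg_abs_le (t - gp z y (x n))]

lemma f_ge {f : M → ℝ} (hf : LipschitzWith 1 f) (hz : f z = 0) (y : M) : - dist z y ≤ f y := by
  have := hf.dist_le_mul z y
  rw [Real.dist_eq, hz] at this
  simp at this
  linarith [neg_abs_le (f y)]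

lemma ft_bdd (x : ℕ → M) {f : M → ℝ} (hf : LipschitzWith 1 f) (hz : f z = 0) (n : ℕ) (t : ℝ) :
    BddBelow (Set.range fun y : M => f y + EE z x n y t) := by
  refine ⟨-t, ?_⟩
  rintro _ ⟨y, rfl⟩
  have := EE_ge (z := z) x n y t
  have := f_ge hf hz y
  simp only
  linarith

lemma EE_lip (x : ℕ → M) (n : ℕ) (y : M) (s t : ℝ) :
    EE z x n y s ≤ EE z x n y t + |s - t| := by
  unfold EE
  have := abs_sub_le s t (gp z y (x n))
  linarith

lemma ft_lip (x : ℕ → M) {f : M → ℝ} (hf : LipschitzWith 1 f) (hz : f z = 0) (n : ℕ) :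
    LipschitzWith 1 (ft z x f n) := by
  have : Nonempty M := ⟨z⟩
  apply LipschitzWith.of_le_add
  intro s t
  rw [← sub_le_iff_le_add]
  apply le_ciInf
  intro y
  have h1 := ciInf_le (ft_bdd x hf hz n s) y
  have h2 := EE_lip (z := z) x n y s t
  rw [Real.dist_eq]
  unfold ft
  linarith

lemma ft_top (x : ℕ → M) {f : M → ℝ} (hf : LipschitzWith 1 f) (hz : f z = 0) (n : ℕ) :
    ft z x f n (dist z (x n)) = f (x n) := by
  have : Nonempty M := ⟨z⟩
  have hE : ∀ y, EE z x n y (dist z (x n)) = dist y (x n) := by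
    intro y
    unfold EE
    rw [abs_of_nonneg (by linarith [gp_le_right z y (x n)]), dist_eq_gp z y (x n)]
    ring
  apply le_antisymm
  · have := ciInf_le (ft_bdd x hf hz n (dist z (x n))) (x n)
    simp only [hE, dist_self, add_zero] at this
    unfold ft
    simp only [hE]
    exact this
  · apply le_ciInf
    intro y
    rw [hE]
    have := hf.dist_le_mul (x n) y
    rw [Real.dist_eq] at this
    simp at this
    rw [dist_comm y]
    linarith [le_abs_self (f (x n) - f y)]

lemma ft_zero (x : ℕ → M) {f : M → ℝ} (hf : LipschitzWith 1 f) (hz : f z = 0) (n : ℕ) :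
    ft z x f n 0 = 0 := by
  have : Nonempty M := ⟨z⟩
  have hE : ∀ y, EE z x n y 0 = dist z y := by
    intro y
    unfold EE
    rw [zero_sub, abs_neg, abs_of_nonneg (gp_nonneg z y (x n))]
    ring
  apply le_antisymm
  · have := ciInf_le (ft_bdd x hf hz n 0) z
    simp only [hE, dist_self, add_zero, hz] at this
    unfold ft
    simp only [hE]
    exact this
  · apply le_ciInf
    intro y
    rw [hE]
    linarith [f_ge hf hz y]

lemma EE_eq (hu : UGp z) (x : ℕ → M) {i n : ℕ} {s : ℝ} (h : s ≤ gp z (x i) (x n)) (y : M) :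
    EE z x i y s = EE z x n y s := by
  have h' : s ≤ gp z (x n) (x i) := by rwa [gp_comm]
  unfold EE
  by_cases h1 : s ≤ gp z y (x n)
  · have h2 : s ≤ gp z y (x i) := hu.trans_le h1 h'
    rw [abs_of_nonpos (by linarith), abs_of_nonpos (by linarith)]
    ring
  · have h2 : ¬ s ≤ gp z y (x i) := fun h2 => h1 (hu.trans_le h2 h)
    push Not at h1 h2
    have a : gp z y (x n) ≤ gp z y (x i) := hu.trans_le le_rfl (h1.le.trans h')
    have b : gp z y (x i) ≤ gp z y (x n) := hu.trans_le le_rfl (h2.le.trans h)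
    rw [le_antisymm a b]

lemma ft_eq (hu : UGp z) (x : ℕ → M) (f : M → ℝ) {i n : ℕ} {s : ℝ} (h : s ≤ gp z (x i) (x n)) :
    ft z x f i s = ft z x f n s := by
  unfold ft
  simp_rw [EE_eq hu x h]

/-- the derivative of the extension -/
noncomputable def gder (z : M) (x : ℕ → M) (f : M → ℝ) (p : ℕ × ℝ) : ℝ :=
  deriv (ft z x f p.1) p.2

lemma measurable_gder (x : ℕ → M) (f : M → ℝ) : Measurable (gder z x f) := by
  apply measurable_from_prod_countable_right
  intro n
  exact measurable_deriv (ft z x f n)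

lemma gder_le (x : ℕ → M) {f : M → ℝ} (hf : LipschitzWith 1 f) (hz : f z = 0) (p : ℕ × ℝ) :
    |gder z x f p| ≤ 1 := by
  have := norm_deriv_le_of_lipschitz (x₀ := p.2) (ft_lip x hf hz p.1)
  simpa [gder] using this

lemma integral_piece (x : ℕ → M) {g : ℕ × ℝ → ℝ} (m : ℕ) {h s : ℝ} (h0 : 0 ≤ h)
    (hs : h ≤ s) (hsm : s ≤ dist z (x m)) (hi : ∀ i < m, gp z (x i) (x m) ≤ h) :
    ∫ p in Bey z x (x m) ∩ {p | h < p.2 ∧ p.2 ≤ s}, g p ∂(lam z x) = ∫ t in h..s, g (m, t) := by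
  have hm : MeasurableSet (Bey z x (x m) ∩ {p : ℕ × ℝ | h < p.2 ∧ p.2 ≤ s}) :=
    (measSet_Bey z x _).inter (measurable_snd measurableSet_Ioc)
  have hset : (Bey z x (x m) ∩ {p : ℕ × ℝ | h < p.2 ∧ p.2 ≤ s}) ∩ Om z x
      = ({m} : Set ℕ) ×ˢ Set.Ioc h s := by
    ext ⟨n, t⟩
    simp only [Set.mem_inter_iff, Set.mem_ofPred_eq, Set.mem_prod, Set.mem_singleton_iff,
      Set.mem_Ioc, Bey, Om]
    constructor
    · rintro ⟨⟨h1, h2⟩, h3, h4, h5⟩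
      refine ⟨?_, h2⟩
      rcases lt_trichotomy n m with hlt | heq | hlt
      · have := hi n hlt
        rw [gp_comm] at this
        linarith [h2.1]
      · exact heq
      · have := h5 m hlt
        linarith
    · rintro ⟨rfl, h2⟩
      rw [gp_self]
      refine ⟨⟨by linarith [h2.2], h2⟩, by linarith [h2.1], by linarith [h2.2], ?_⟩
      intro i hlt
      linarith [hi i hlt, h2.1]
  rw [lam, Measure.restrict_restrict hm, hset, ← Measure.prod_restrict, Measure.restrict_singleton,
    Measure.count_singleton, one_smul, Measure.dirac_prod,
    (measurableEmbedding_prodMk_left m).integral_map, intervalIntegral.integral_of_le hs]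

lemma integrableOn_bey (hu : UGp z) (x : ℕ → M) (y : M) {g : ℕ × ℝ → ℝ} (hg : Measurable g)
    (hg1 : ∀ p, |g p| ≤ 1) : IntegrableOn g (Bey z x y) (lam z x) := by
  have := integrable_ee_mul hu x y hg hg1
  rw [← integrable_indicator_iff (measSet_Bey z x y)]
  refine this.congr (Eventually.of_forall fun p => ?_)
  by_cases h : p ∈ Bey z x y <;> simp [ee, h]

lemma setIntegral_eq_zero_of_ae_eq_zero_lam (x : ℕ → M) (A : Set (ℕ × ℝ)) (g : ℕ × ℝ → ℝ) :
    ∫ p in A ∩ {p | p.2 ≤ 0}, g p ∂(lam z x) = 0 := by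
  have h : lam z x (A ∩ {p | p.2 ≤ 0}) = 0 := by
    apply measure_mono_null Set.inter_subset_right
    have hme : MeasurableSet {p : ℕ × ℝ | p.2 ≤ 0} := measurable_snd measurableSet_Iic
    rw [lam, Measure.restrict_apply hme]
    convert measure_empty (μ := ((Measure.count : Measure ℕ).prod (volume : Measure ℝ)))
    ext p
    simp only [Set.mem_inter_iff, Set.mem_empty_iff_false, iff_false, not_and]
    intro h hp
    exact absurd hp.1 (not_lt.2 h)
  rw [Measure.restrict_eq_zero.2 h, integral_zero_measure]

lemma ft_repr (hu : UGp z) (x : ℕ → M) (hx0 : x 0 = z) {f : M → ℝ} (hf : LipschitzWith 1 f)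
    (hz : f z = 0) (m : ℕ) : ∀ s, 0 ≤ s → s ≤ dist z (x m) →
    ft z x f m s = ∫ p in Bey z x (x m) ∩ {p | p.2 ≤ s}, gder z x f p ∂(lam z x) := by
  induction m using Nat.strong_induction_on with
  | _ m ih =>
  have stepA : ∀ i < m, ∀ s, 0 ≤ s → s ≤ gp z (x i) (x m) →
      ft z x f m s = ∫ p in Bey z x (x m) ∩ {p | p.2 ≤ s}, gder z x f p ∂(lam z x) := by
    intro i hi s h0 hs
    rw [← ft_eq hu x f hs, ih i hi s h0 (hs.trans (gp_le_left _ _ _))]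
    congr 2
    ext p
    simp only [Set.mem_inter_iff, Set.mem_ofPred_eq, Bey]
    constructor
    · rintro ⟨h1, h2⟩
      exact ⟨hu.trans_le (by rw [gp_comm]; exact h2.trans hs) h1, h2⟩
    · rintro ⟨h1, h2⟩
      exact ⟨hu.trans_le (h2.trans hs) h1, h2⟩
  intro s h0 hs
  rcases Nat.eq_zero_or_pos m with rfl | hm
  · rw [hx0, dist_self] at hs
    have hs0 : s = 0 := le_antisymm hs h0
    subst hs0
    rw [ft_zero x hf hz, setIntegral_eq_zero_of_ae_eq_zero_lam x]
  · obtain ⟨i, hi, himax⟩ := Finset.exists_max_image (Finset.range m)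
      (fun i => gp z (x i) (x m)) ⟨0, Finset.mem_range.2 hm⟩
    rw [Finset.mem_range] at hi
    by_cases hc : s ≤ gp z (x i) (x m)
    · exact stepA i hi s h0 hc
    · push Not at hc
      set h := gp z (x i) (x m) with hh
      have hh0 : 0 ≤ h := gp_nonneg _ _ _
      have e1 := stepA i hi h hh0 le_rfl
      have e2 := integral_piece x (g := gder z x f) m hh0 hc.le hs
        (fun j hj => himax j (Finset.mem_range.2 hj))
      have e3 : ∫ t in h..s, gder z x f (m, t) = ft z x f m s - ft z x f m h := by
        exact AbsolutelyContinuousOnInterval.integral_deriv_eq_sub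
          ((ft_lip x hf hz m).lipschitzOnWith.absolutelyContinuousOnInterval)
      have hset : Bey z x (x m) ∩ {p : ℕ × ℝ | p.2 ≤ s} =
          (Bey z x (x m) ∩ {p | p.2 ≤ h}) ∪ (Bey z x (x m) ∩ {p | h < p.2 ∧ p.2 ≤ s}) := by
        ext p
        simp only [Set.mem_inter_iff, Set.mem_ofPred_eq, Set.mem_union]
        constructor
        · rintro ⟨a, b⟩
          rcases le_or_gt p.2 h with c | c
          · exact Or.inl ⟨a, c⟩
          · exact Or.inr ⟨a, c, b⟩
        · rintro (⟨a, b⟩ | ⟨a, b, c⟩)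
          · exact ⟨a, b.trans hc.le⟩
          · exact ⟨a, c⟩
      have hint := integrableOn_bey hu x (x m) (measurable_gder (z := z) x f) (gder_le x hf hz)
      rw [hset, setIntegral_union _ _ (hint.mono_set Set.inter_subset_left)
        (hint.mono_set Set.inter_subset_left), e2, e3, ← e1]
      · ring
      · rw [Set.disjoint_left]
        rintro p ⟨_, a⟩ ⟨_, b, _⟩
        exact absurd b (not_lt.2 a)
      · exact (measSet_Bey z x _).inter (measurable_snd measurableSet_Ioc)

lemma f_repr (hu : UGp z) (x : ℕ → M) (hx0 : x 0 = z) {f : M → ℝ} (hf : LipschitzWith 1 f)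
    (hz : f z = 0) (m : ℕ) : f (x m) = fg z x (gder z x f) (x m) := by
  rw [← ft_top x hf hz m, ft_repr hu x hx0 hf hz m _ dist_nonneg le_rfl]
  have : Bey z x (x m) ∩ {p : ℕ × ℝ | p.2 ≤ dist z (x m)} = Bey z x (x m) := by
    apply Set.inter_eq_left.2
    intro p hp
    exact le_trans hp (gp_le_left _ _ _)
  rw [this, fg, ← integral_indicator (measSet_Bey z x _)]
  congr 1
  funext p
  by_cases h : p ∈ Bey z x (x m) <;> simp [ee, h]

lemma pair_le (hu : UGp z) (x : ℕ → M) (hx0 : x 0 = z) (ν : M →₀ ℝ)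
    (hν : ∀ y ∈ ν.support, ∃ m, x m = y) {f : M → ℝ} (hf : LipschitzWith 1 f) (hz : f z = 0) :
    ∑ y ∈ ν.support, ν y * f y ≤ ∫ p, |FF z x ν p| ∂(lam z x) := by
  have h1 : ∑ y ∈ ν.support, ν y * f y =
      ∑ y ∈ ν.support, ν y * fg z x (gder z x f) y := by
    apply Finset.sum_congr rfl
    intro y hy
    obtain ⟨m, rfl⟩ := hν y hy
    rw [f_repr hu x hx0 hf hz m]
  have hm := measurable_gder (z := z) x f
  have hb := gder_le x hf hz
  rw [h1, pair_fg hu x ν hm hb]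
  apply integral_mono
  · exact (integrable_FF hu x ν).mul_bdd (c := 1) hm.aestronglyMeasurable
      (Eventually.of_forall hb)
  · exact (integrable_FF hu x ν).abs
  · intro p
    change FF z x ν p * gder z x f p ≤ |FF z x ν p|
    refine (le_abs_self _).trans ?_
    rw [abs_mul]
    exact mul_le_of_le_one_right (abs_nonneg _) (hb p)

end ext

section hump

lemma ulim (𝒰 : Ultrafilter ℕ) (u : ℕ → ℝ) (C : ℝ) (h : ∀ j, |u j| ≤ C) :
    ∃ L, Tendsto u 𝒰 (𝓝 L) := by
  have hc : IsCompact (Set.Icc (-C) C) := isCompact_Icc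
  obtain ⟨L, _, hL⟩ := hc.ultrafilter_le_nhds (𝒰.map u) (by
    rw [le_principal_iff]
    exact Filter.mem_map.2 (Filter.univ_mem' fun j => abs_le.1 (h j)))
  exact ⟨L, hL⟩

/-- A sign function. -/
noncomputable def sg (r : ℝ) : ℝ := if 0 ≤ r then 1 else -1

lemma measurable_sg : Measurable sg :=
  Measurable.ite measurableSet_Ici measurable_const measurable_const

lemma abs_sg (r : ℝ) : |sg r| = 1 := by
  unfold sg; split_ifs <;> simp

lemma mul_sg (r : ℝ) : r * sg r = |r| := by
  unfold sg; split_ifs with h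
  · rw [abs_of_nonneg h, mul_one]
  · rw [abs_of_neg (not_le.1 h)]; ring

lemma mul_ge_neg_abs {r g : ℝ} (hg : |g| ≤ 1) : -|r| ≤ r * g := by
  have : |r * g| ≤ |r| := by
    rw [abs_mul]; exact mul_le_of_le_one_right (abs_nonneg _) hg
  linarith [neg_abs_le (r * g)]

lemma hump {X : Type*} [MeasurableSpace X] (lm : Measure X) (F : ℕ → X → ℝ)
    (hm : ∀ j, Measurable (F j)) (hi : ∀ j, Integrable (F j) lm) (C c : ℝ)
    (hC : ∀ j, ∫ p, |F j p| ∂lm ≤ C) (hc : ∀ j, c ≤ ∫ p, |F j p| ∂lm)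
    (A : ℕ → Set X) (hA : ∀ m, MeasurableSet (A m)) (hmono : Monotone A)
    (hcov : ∀ᵐ p ∂lm, ∃ m, p ∈ A m)
    (𝒰 : Ultrafilter ℕ) (h𝒰 : (𝒰 : Filter ℕ) ≤ atTop)
    (hcau : ∀ m, ∀ ε > 0, ∃ U ∈ 𝒰, ∀ j ∈ U, ∀ k ∈ U, ∫ p in A m, |F j p - F k p| ∂lm ≤ ε)
    (ε : ℝ) (hε : 0 < ε) :
    ∃ g : X → ℝ, Measurable g ∧ (∀ p, |g p| ≤ 1) ∧
      ∀ N : ℕ, ∃ j ≥ N, c - 10 * ε ≤ ∫ p, F j p * g p ∂lm := by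
  have hia : ∀ j, Integrable (fun p => |F j p|) lm := fun j => (hi j).abs
  have hpos : ∀ j (S : Set X), 0 ≤ ∫ p in S, |F j p| ∂lm := fun j S =>
    integral_nonneg fun p => abs_nonneg _
  have hle : ∀ j (S : Set X), ∫ p in S, |F j p| ∂lm ≤ C := fun j S =>
    (setIntegral_le_integral (hia j) (Eventually.of_forall fun p => abs_nonneg _)).trans (hC j)
  have hL : ∀ m, ∃ L, Tendsto (fun j => ∫ p in A m, |F j p| ∂lm) 𝒰 (𝓝 L) := fun m =>
    ulim 𝒰 _ C fun j => by rw [abs_of_nonneg (hpos j _)]; exact hle j _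
  choose L hL using hL
  have hLC : ∀ m, L m ≤ C := fun m => le_of_tendsto (hL m) (Eventually.of_forall fun j => hle j _)
  have hbdd : BddAbove (Set.range L) := ⟨C, by rintro _ ⟨m, rfl⟩; exact hLC m⟩
  obtain ⟨m1, hm1⟩ : ∃ m1, ∀ m, L m ≤ L m1 + ε := by
    obtain ⟨_, ⟨m1, rfl⟩, h⟩ := exists_lt_of_lt_csSup (Set.range_nonempty L)
      (sub_lt_self (sSup (Set.range L)) hε)
    exact ⟨m1, fun m => by linarith [le_csSup hbdd ⟨m, rfl⟩]⟩
  obtain ⟨U1, hU1, hU1'⟩ := hcau m1 ε hε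
  obtain ⟨j0, hj0⟩ := 𝒰.nonempty_of_mem hU1
  have hj : ∀ m i : ℕ, ∃ j ≥ i, j ∈ U1 ∧ ∫ p in A m \ A m1, |F j p| ∂lm ≤ 3 * ε := by
    intro m i
    have e1 : ∀ᶠ j in (𝒰 : Filter ℕ), ∫ p in A (max m m1), |F j p| ∂lm < L (max m m1) + ε :=
      (hL _).eventually (gt_mem_nhds (by linarith))
    have e2 : ∀ᶠ j in (𝒰 : Filter ℕ), L m1 - ε < ∫ p in A m1, |F j p| ∂lm :=
      (hL _).eventually (lt_mem_nhds (by linarith))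
    have e3 : ∀ᶠ j in (𝒰 : Filter ℕ), i ≤ j := h𝒰 (eventually_ge_atTop i)
    have e4 : ∀ᶠ j in (𝒰 : Filter ℕ), j ∈ U1 := hU1
    obtain ⟨j, h1, h2, h3, h4⟩ := (e1.and (e2.and (e3.and e4))).exists
    refine ⟨j, h3, h4, ?_⟩
    have h5 : ∫ p in A (max m m1) \ A m1, |F j p| ∂lm =
        ∫ p in A (max m m1), |F j p| ∂lm - ∫ p in A m1, |F j p| ∂lm :=
      setIntegral_sdiff (hA m1) (hia j).integrableOn (hmono (le_max_right _ _))
    have h6 : ∫ p in A m \ A m1, |F j p| ∂lm ≤ ∫ p in A (max m m1) \ A m1, |F j p| ∂lm :=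
      setIntegral_mono_set (hia j).integrableOn (Eventually.of_forall fun p => abs_nonneg _)
        (Set.sdiff_subset_sdiff_left (hmono (le_max_left _ _))).eventuallyLE
    linarith [hm1 (max m m1)]
  have hn : ∀ j m : ℕ, ∃ m' ≥ m, ∫ p in (A m')ᶜ, |F j p| ∂lm ≤ ε := by
    intro j m
    have t1 := tendsto_setIntegral_of_antitone (μ := lm) (f := fun p => |F j p|)
      (s := fun m => (A m)ᶜ) (fun m => (hA m).compl)
      (fun a b hab => Set.compl_subset_compl.2 (hmono hab)) ⟨0, (hia j).integrableOn⟩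
    have t2 : lm (⋂ m, (A m)ᶜ) = 0 := by
      rw [ae_iff] at hcov
      convert hcov using 2
      ext p; simp
    rw [Measure.restrict_eq_zero.2 t2, integral_zero_measure] at t1
    have e1 := t1.eventually (gt_mem_nhds hε)
    obtain ⟨m', h1, h2⟩ := (e1.and (eventually_ge_atTop m)).exists
    exact ⟨m', h2, h1.le⟩
  choose nj hnj1 hnj2 hnj3 using hj
  choose nm hnm1 hnm2 using hn
  let ms : ℕ → ℕ := fun i => Nat.rec m1 (fun i m => nm (nj m i) m) i
  have ms0 : ms 0 = m1 := rfl
  have mss : ∀ i, ms (i + 1) = nm (nj (ms i) i) (ms i) := fun i => rfl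
  have msmono : Monotone ms := monotone_nat_of_le_succ fun i => by rw [mss]; exact hnm1 _ _
  let t : ℕ → Set X := fun i => Nat.casesOn i (A m1) (fun i => A (ms (i + 1)) \ A (ms i))
  let G : ℕ → X → ℝ := fun i => Nat.casesOn i (fun p => sg (F j0 p))
    (fun i p => sg (F (nj (ms i) i) p))
  have ht : ∀ i, MeasurableSet (t i) := by
    intro i
    cases i with
    | zero => exact hA m1
    | succ i => exact (hA _).diff (hA _)
  have hG : ∀ i, Measurable (G i) := by
    intro i
    cases i with
    | zero => exact measurable_sg.comp (hm _)
    | succ i => exact measurable_sg.comp (hm _)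
  have hsub : ∀ i, t i ⊆ A (ms i) := by
    intro i
    cases i with
    | zero => exact subset_rfl
    | succ i => exact Set.sdiff_subset
  have hdis : ∀ i k, i < k → ∀ p, p ∈ t i → p ∉ t k := by
    intro i k hik p hp hp'
    cases k with
    | zero => omega
    | succ k => exact hp'.2 (hmono (msmono (Nat.lt_succ_iff.1 hik)) (hsub i hp))
  obtain ⟨g0, hg0, hg0'⟩ := exists_measurable_piecewise t ht G hG (by
    intro i k hik p hp
    rcases lt_or_gt_of_ne hik with h | h
    · exact absurd hp.2 (hdis _ _ h p hp.1)
    · exact absurd hp.1 (hdis _ _ h p hp.2))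
  refine ⟨fun p => max (-1) (min 1 (g0 p)), measurable_const.max (measurable_const.min hg0),
    ?_, ?_⟩
  · intro p
    rw [abs_le]
    exact ⟨le_max_left _ _, max_le (by norm_num) (min_le_left _ _)⟩
  set g : X → ℝ := fun p => max (-1) (min 1 (g0 p)) with hgdef
  have hgm : Measurable g := measurable_const.max (measurable_const.min hg0)
  have hg1 : ∀ p, |g p| ≤ 1 := by
    intro p
    rw [abs_le]
    exact ⟨le_max_left _ _, max_le (by norm_num) (min_le_left _ _)⟩
  have hclamp : ∀ p r, g0 p = sg r → g p = sg r := by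
    intro p r h
    have := abs_le.1 (abs_sg r).le
    simp only [hgdef, h]
    rw [min_eq_right this.2, max_eq_right this.1]
  intro N
  set j := nj (ms N) N with hjdef
  refine ⟨j, hnj1 _ _, ?_⟩
  have hgA : ∀ p ∈ A m1, g p = sg (F j0 p) := fun p hp => hclamp p _ (hg0' 0 hp)
  have hgB : ∀ p ∈ A (ms (N + 1)) \ A (ms N), g p = sg (F j p) := fun p hp =>
    hclamp p _ (hg0' (N + 1) hp)
  have i1 : Integrable ((A m1).indicator fun p => |F j p - F j0 p|) lm :=
    ((hi j).sub (hi j0)).abs.indicator (hA m1)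
  have i2 : Integrable ((A (ms N) \ A m1).indicator fun p => |F j p|) lm :=
    (hia j).indicator ((hA _).diff (hA _))
  have i3 : Integrable ((A (ms (N + 1)))ᶜ.indicator fun p => |F j p|) lm :=
    (hia j).indicator (hA _).compl
  have hpt : ∀ p, |F j p| - 2 * (A m1).indicator (fun p => |F j p - F j0 p|) p
      - 2 * (A (ms N) \ A m1).indicator (fun p => |F j p|) p
      - 2 * (A (ms (N + 1)))ᶜ.indicator (fun p => |F j p|) p ≤ F j p * g p := by
    intro p
    have hneg := mul_ge_neg_abs (r := F j p) (hg1 p)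
    have n1 : 0 ≤ (A m1).indicator (fun p => |F j p - F j0 p|) p :=
      Set.indicator_nonneg (fun p _ => abs_nonneg _) p
    have n2 : 0 ≤ (A (ms N) \ A m1).indicator (fun p => |F j p|) p :=
      Set.indicator_nonneg (fun p _ => abs_nonneg _) p
    have n3 : 0 ≤ (A (ms (N + 1)))ᶜ.indicator (fun p => |F j p|) p :=
      Set.indicator_nonneg (fun p _ => abs_nonneg _) p
    by_cases h1 : p ∈ A m1
    · rw [Set.indicator_of_mem h1] at n1 ⊢
      rw [hgA p h1]
      have a := mul_sg (F j0 p)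
      have b := mul_ge_neg_abs (r := F j p - F j0 p) (abs_sg (F j0 p)).le
      have d := abs_sub_abs_le_abs_sub (F j p) (F j0 p)
      nlinarith
    · by_cases h2 : p ∈ A (ms N)
      · have : p ∈ A (ms N) \ A m1 := ⟨h2, h1⟩
        rw [Set.indicator_of_mem this]
        linarith
      · by_cases h3 : p ∈ A (ms (N + 1))
        · rw [hgB p ⟨h3, h2⟩, mul_sg]
          linarith
        · have : p ∈ (A (ms (N + 1)))ᶜ := h3
          rw [Set.indicator_of_mem this]
          linarith
  have hint := integral_mono (((((hia j).sub (i1.const_mul 2)).sub (i2.const_mul 2)).sub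
    (i3.const_mul 2))) ((hi j).mul_bdd (c := 1) hgm.aestronglyMeasurable
    (Eventually.of_forall hg1)) hpt
  have heq : ∫ p, (|F j p| - 2 * (A m1).indicator (fun p => |F j p - F j0 p|) p
      - 2 * (A (ms N) \ A m1).indicator (fun p => |F j p|) p
      - 2 * (A (ms (N + 1)))ᶜ.indicator (fun p => |F j p|) p) ∂lm =
      ∫ p, |F j p| ∂lm - 2 * ∫ p in A m1, |F j p - F j0 p| ∂lm
      - 2 * ∫ p in A (ms N) \ A m1, |F j p| ∂lm - 2 * ∫ p in (A (ms (N + 1)))ᶜ, |F j p| ∂lm := by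
    rw [integral_sub, integral_sub, integral_sub, integral_const_mul, integral_const_mul,
      integral_const_mul, integral_indicator (hA m1), integral_indicator ((hA _).diff (hA _)),
      integral_indicator (hA _).compl]
    · exact hia j
    · exact i1.const_mul 2
    · exact (hia j).sub (i1.const_mul 2)
    · exact i2.const_mul 2
    · exact ((hia j).sub (i1.const_mul 2)).sub (i2.const_mul 2)
    · exact i3.const_mul 2
  have hint' := heq.symm.le.trans hint
  have b1 := hU1' j (hnj2 _ _) j0 hj0
  have b2 := hnj3 (ms N) N
  have b3 := hnm2 j (ms N)
  rw [← mss] at b3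
  have b4 := hc j
  linarith

end hump

lemma pair_sub {M : Type*} (a b : M →₀ ℝ) (f : M → ℝ) :
    ∑ y ∈ (a - b).support, (a - b) y * f y =
      ∑ y ∈ a.support, a y * f y - ∑ y ∈ b.support, b y * f y :=
  Finsupp.sum_sub_index (h := fun y c => c * f y) fun y c d => sub_mul c d (f y)

section fin
variable {M : Type*} [MetricSpace M] {z : M}

lemma pair_abs_le (ν : M →₀ ℝ) {f : M → ℝ} (hf : LipschitzWith 1 f) (hz : f z = 0) :
    ∑ y ∈ ν.support, ν y * f y ≤ ∑ y ∈ ν.support, |ν y| * dist z y := by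
  apply Finset.sum_le_sum
  intro y _
  refine (le_abs_self _).trans ?_
  rw [abs_mul]
  apply mul_le_mul_of_nonneg_left _ (abs_nonneg _)
  have := hf.dist_le_mul z y
  rw [Real.dist_eq, hz] at this
  simpa using this

lemma freeNorm_bdd (ν : M →₀ ℝ) : BddAbove {s | ∃ f : M → ℝ, f z = 0 ∧ LipschitzWith 1 f ∧
    s = ∑ x ∈ ν.support, ν x * f x} := by
  refine ⟨∑ y ∈ ν.support, |ν y| * dist z y, ?_⟩
  rintro _ ⟨f, hz, hf, rfl⟩
  exact pair_abs_le ν hf hz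

lemma le_freeNorm (ν : M →₀ ℝ) {f : M → ℝ} (hf : LipschitzWith 1 f) (hz : f z = 0) :
    ∑ y ∈ ν.support, ν y * f y ≤ freeNorm z ν :=
  le_csSup (freeNorm_bdd ν) ⟨f, hz, hf, rfl⟩

lemma abs_le_freeNorm (ν : M →₀ ℝ) {f : M → ℝ} (hf : LipschitzWith 1 f) (hz : f z = 0) :
    |∑ y ∈ ν.support, ν y * f y| ≤ freeNorm z ν := by
  rw [abs_le']
  refine ⟨le_freeNorm ν hf hz, ?_⟩
  have h : LipschitzWith 1 (fun y => - f y) := hf.neg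
  have := le_freeNorm (z := z) ν h (by simp [hz])
  simpa using this

lemma freeNorm_le (ν : M →₀ ℝ) {B : ℝ} (h : ∀ f : M → ℝ, f z = 0 → LipschitzWith 1 f →
    ∑ y ∈ ν.support, ν y * f y ≤ B) : freeNorm z ν ≤ B := by
  apply csSup_le
  · exact ⟨_, fun _ => 0, rfl, LipschitzWith.const' 0, rfl⟩
  · rintro _ ⟨f, hz, hf, rfl⟩
    exact h f hz hf

lemma freeNorm_nonneg (ν : M →₀ ℝ) : 0 ≤ freeNorm z ν := by
  have := le_freeNorm (z := z) ν (f := fun _ => 0) (LipschitzWith.const' 0) rfl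
  simpa using this

lemma freeNorm_sub_le (a b : M →₀ ℝ) : freeNorm z (a - b) ≤ freeNorm z a + freeNorm z b := by
  apply freeNorm_le
  intro f hz hf
  rw [pair_sub]
  have h1 := le_freeNorm a hf hz
  have h2 := (abs_le.1 (abs_le_freeNorm b hf hz)).1
  linarith

lemma FF_sub (x : ℕ → M) (a b : M →₀ ℝ) (p : ℕ × ℝ) :
    FF z x (a - b) p = FF z x a p - FF z x b p := by
  unfold FF; exact pair_sub a b _

lemma integral_FF_le (hu : UGp z) (x : ℕ → M) (ν : M →₀ ℝ) :
    ∫ p, |FF z x ν p| ∂(lam z x) ≤ freeNorm z ν := by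
  have hm : Measurable fun p => sg (FF z x ν p) := measurable_sg.comp (measurable_FF x ν)
  have hb : ∀ p, |sg (FF z x ν p)| ≤ 1 := fun p => (abs_sg _).le
  have := le_freeNorm ν (fg_lip hu x hm hb) (fg_base x _)
  rw [pair_fg hu x ν hm hb] at this
  simpa only [mul_sg] using this

lemma dist_ge_of_lt (hu : UGp z) (w : M) {y y' : M} (h : gp z y w < gp z y' w) :
    (dist z y - gp z y w) + (dist z y' - gp z y w) ≤ dist y y' := by
  have : gp z y y' ≤ gp z y w := by
    by_contra hc
    push Not at hc
    have := (lt_min hc h).trans_le (hu y y' w)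
    exact lt_irrefl _ this
  rw [dist_eq_gp z y y']
  linarith

lemma lip_of_gp (hu : UGp z) (w : M) (ψ : ℝ → ℝ)
    (h : ∀ y y', gp z y w < gp z y' w → |ψ (gp z y w) - ψ (gp z y' w)| ≤
      (dist z y - gp z y w) + (dist z y' - gp z y w)) :
    LipschitzWith 1 fun y => ψ (gp z y w) := by
  apply LipschitzWith.of_dist_le_mul
  intro y y'
  rw [NNReal.coe_one, one_mul, Real.dist_eq]
  rcases lt_trichotomy (gp z y w) (gp z y' w) with hl | hl | hl
  · exact (h _ _ hl).trans (dist_ge_of_lt hu w hl)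
  · rw [hl]; simp
  · rw [abs_sub_comm, dist_comm]
    exact (h _ _ hl).trans (dist_ge_of_lt hu w hl)

/-- The good part of a segment. -/
def Good (z : M) (x : ℕ → M) (n : ℕ) (r : ℝ) : Set ℝ :=
  {t | 0 < t ∧ t ≤ dist z (x n) ∧ ∀ y, r ≤ EE z x n y t}

/-- Step function -/
noncomputable def st (s v : ℝ) : ℝ := if s ≤ v then 1 else 0

lemma ee_st (x : ℕ → M) (n : ℕ) (t : ℝ) (y : M) : ee z x y (n, t) = st t (gp z y (x n)) := by
  by_cases h : t ≤ gp z y (x n)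
  · have h' : (n, t) ∈ Bey z x y := h
    simp [ee, st, h, h']
  · have h' : (n, t) ∉ Bey z x y := h
    simp [ee, st, h, h']

lemma FF_bound (hu : UGp z) (x : ℕ → M) (n : ℕ) {r t : ℝ} (hr : 0 < r) (ht : t ∈ Good z x n r)
    (ν : M →₀ ℝ) : |FF z x ν (n, t)| ≤ freeNorm z ν / r := by
  have hl : LipschitzWith 1 fun y => (fun v => r * st t v) (gp z y (x n)) := by
    apply lip_of_gp hu (x n) (fun v => r * st t v)
    intro y y' hlt
    have a1 := gp_le_left z y (x n)
    have a2 := gp_le_left z y' (x n)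
    have hE := ht.2.2 y'
    unfold EE at hE
    simp only [st]
    by_cases h1 : t ≤ gp z y (x n)
    · rw [if_pos h1, if_pos (h1.trans hlt.le), sub_self, abs_zero]
      linarith
    · by_cases h2 : t ≤ gp z y' (x n)
      · rw [if_neg h1, if_pos h2]
        rw [abs_of_nonpos (by linarith)] at hE
        rw [mul_zero, zero_sub, abs_neg, mul_one, abs_of_pos hr]
        linarith
      · rw [if_neg h1, if_neg h2, sub_self, abs_zero]
        linarith
  have := abs_le_freeNorm (z := z) ν hl (by
    simp only [gp_base, st, if_neg (not_le.2 ht.1), mul_zero])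
  rw [le_div_iff₀ hr]
  refine le_trans (le_of_eq ?_) this
  rw [mul_comm, ← abs_of_pos hr, ← abs_mul, abs_of_pos hr]
  unfold FF
  rw [Finset.mul_sum]
  refine congrArg abs ?_
  apply Finset.sum_congr rfl
  intro y _
  rw [ee_st]
  ring

lemma variation_bound (hu : UGp z) (x : ℕ → M) (n : ℕ) {r δ : ℝ} (hr : 0 < r) (hδ : 0 < δ)
    (hδr : δ ≤ r / 2) (I : Finset ℕ) (s t : ℕ → ℝ)
    (hs : ∀ j ∈ I, s j ∈ Good z x n r ∧ s j ∈ Set.Ico (j * δ) ((j + 1) * δ))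
    (ht : ∀ j ∈ I, t j ∈ Good z x n r ∧ t j ∈ Set.Ico (j * δ) ((j + 1) * δ))
    (ν : M →₀ ℝ) :
    ∑ j ∈ I, |FF z x ν (n, s j) - FF z x ν (n, t j)| ≤ freeNorm z ν / (r / 2) := by
  set σ : ℕ → ℝ := fun j => sg (FF z x ν (n, s j) - FF z x ν (n, t j)) with hσ
  set ψ : ℝ → ℝ := fun v => ∑ j ∈ I, (r / 2) * σ j * (st (s j) v - st (t j) v) with hψ
  have hterm : ∀ v, ∀ j ∈ I, st (s j) v - st (t j) v ≠ 0 → v ∈ Set.Ico (j * δ) ((j + 1) * δ) := by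
    intro v j hj hne
    have a := (hs j hj).2
    have b := (ht j hj).2
    unfold st at hne
    constructor
    · by_contra hc
      push Not at hc
      rw [if_neg (by linarith [a.1]), if_neg (by linarith [b.1])] at hne
      simp at hne
    · by_contra hc
      push Not at hc
      rw [if_pos (by linarith [a.2]), if_pos (by linarith [b.2])] at hne
      simp at hne
  have hst : ∀ a b v, |st a v - st b v| ≤ 1 := by
    intro a b v
    unfold st
    split_ifs <;> simp
  have hψb : ∀ y, |ψ (gp z y (x n))| ≤ dist z y - gp z y (x n) := by
    intro y
    set v := gp z y (x n) with hv
    have hvy : 0 ≤ dist z y - v := by linarith [gp_le_left z y (x n)]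
    by_cases hall : ∀ j ∈ I, st (s j) v - st (t j) v = 0
    · have : ψ v = 0 := Finset.sum_eq_zero fun j hj => by rw [hall j hj, mul_zero]
      rw [this, abs_zero]
      exact hvy
    · push Not at hall
      obtain ⟨j, hj, hne⟩ := hall
      have hvj := hterm v j hj hne
      have : ψ v = (r / 2) * σ j * (st (s j) v - st (t j) v) := by
        apply Finset.sum_eq_single_of_mem j hj
        intro k hk hkj
        by_contra hc
        have hvk := hterm v k hk (fun h => hc (by rw [h, mul_zero]))
        apply hkj
        have h1 : (k : ℝ) < j + 1 := lt_of_mul_lt_mul_right (hvk.1.trans_lt hvj.2) hδ.le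
        have h2 : (j : ℝ) < k + 1 := lt_of_mul_lt_mul_right (hvj.1.trans_lt hvk.2) hδ.le
        have h1' : k < j + 1 := by exact_mod_cast h1
        have h2' : j < k + 1 := by exact_mod_cast h2
        omega
      rw [this, abs_mul, abs_mul, abs_sg, mul_one, abs_of_pos (half_pos hr)]
      have e1 : r / 2 * |st (s j) v - st (t j) v| ≤ r / 2 :=
        mul_le_of_le_one_right (half_pos hr).le (hst _ _ _)
      have e2 := (hs j hj).1.2.2 y
      unfold EE at e2
      have e3 : |s j - v| ≤ δ := by
        have a := (hs j hj).2
        rw [abs_le]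
        constructor <;> linarith [a.1, a.2, hvj.1, hvj.2]
      linarith
  have hl : LipschitzWith 1 fun y => ψ (gp z y (x n)) := by
    apply lip_of_gp hu (x n) ψ
    intro y y' hlt
    have a1 := hψb y
    have a2 := hψb y'
    have a3 := abs_sub (ψ (gp z y (x n))) (ψ (gp z y' (x n)))
    linarith
  have := le_freeNorm (z := z) ν hl (by
    rw [gp_base]
    apply Finset.sum_eq_zero
    intro j hj
    simp only [st, if_neg (not_le.2 (hs j hj).1.1), if_neg (not_le.2 (ht j hj).1.1), sub_self,
      mul_zero])
  rw [le_div_iff₀ (half_pos hr)]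
  refine le_trans (le_of_eq ?_) this
  simp only [hψ]
  simp_rw [Finset.mul_sum]
  rw [Finset.sum_comm, Finset.sum_mul]
  apply Finset.sum_congr rfl
  intro j _
  rw [← mul_sg]
  simp only [hσ]
  generalize sg (FF z x ν (n, s j) - FF z x ν (n, t j)) = q
  unfold FF
  rw [← Finset.sum_sub_distrib, Finset.sum_mul, Finset.sum_mul]
  apply Finset.sum_congr rfl
  intro y _
  rw [ee_st, ee_st]
  ring

end fin

section fin2
variable {M : Type*} [MetricSpace M] {z : M}

lemma FF_unif (x : ℕ → M) (ν : M →₀ ℝ) (p : ℕ × ℝ) : |FF z x ν p| ≤ ∑ y ∈ ν.support, |ν y| := by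
  unfold FF
  refine (Finset.abs_sum_le_sum_abs _ _).trans (Finset.sum_le_sum fun y _ => ?_)
  rw [abs_mul]
  apply mul_le_of_le_one_right (abs_nonneg _)
  by_cases h : p ∈ Bey z x y <;> simp [ee, h]

lemma exists_near_max (x : ℕ → M) (n : ℕ) (ν : M →₀ ℝ) (T : Set ℝ) (hT : T.Nonempty) {η : ℝ}
    (hη : 0 < η) : ∃ s ∈ T, ∀ t ∈ T, |FF z x ν (n, t)| ≤ |FF z x ν (n, s)| + η := by
  have hb : BddAbove ((fun t => |FF z x ν (n, t)|) '' T) := by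
    refine ⟨∑ y ∈ ν.support, |ν y|, ?_⟩
    rintro _ ⟨t, _, rfl⟩
    exact FF_unif x ν _
  obtain ⟨_, ⟨s, hs, rfl⟩, h⟩ := exists_lt_of_lt_csSup (hT.image (fun t => |FF z x ν (n, t)|))
    (sub_lt_self (sSup ((fun t => |FF z x ν (n, t)|) '' T)) hη)
  refine ⟨s, hs, fun t ht => ?_⟩
  have := le_csSup hb ⟨t, ht, rfl⟩
  simp only at this h
  linarith

lemma slice_cauchy (hu : UGp z) (x : ℕ → M) (n : ℕ) {r : ℝ} (hr : 0 < r) (ν : ℕ → M →₀ ℝ) (C : ℝ)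
    (hC : ∀ j, freeNorm z (ν j) ≤ C) (𝒰 : Ultrafilter ℕ) (ε : ℝ) (hε : 0 < ε) :
    ∃ U ∈ 𝒰, ∀ j ∈ U, ∀ k ∈ U, ∀ S : Set ℝ, MeasurableSet S → S ⊆ Good z x n r →
      ∫ t in S, |FF z x (ν j) (n, t) - FF z x (ν k) (n, t)| ≤ ε := by
  have hC0 : 0 ≤ C := (freeNorm_nonneg (ν 0)).trans (hC 0)
  set δ : ℝ := min (r / 2) (ε * r / (8 * (C + 1))) with hδdef
  have hδ : 0 < δ := lt_min (half_pos hr) (by positivity)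
  have hδr : δ ≤ r / 2 := min_le_left _ _
  have hδε : δ * (2 * C / (r / 2)) ≤ ε / 2 := by
    have h1 : δ ≤ ε * r / (8 * (C + 1)) := min_le_right _ _
    have h2 : δ * (8 * (C + 1)) ≤ ε * r := (le_div_iff₀ (by positivity)).1 h1
    rw [← mul_div_assoc, div_le_iff₀ (half_pos hr)]
    nlinarith
  obtain ⟨N, hN⟩ := exists_nat_gt (dist z (x n) / δ)
  have hN' : dist z (x n) < N * δ := (div_lt_iff₀ hδ).1 hN
  have hNpos : 0 < (N : ℝ) * δ := dist_nonneg.trans_lt hN'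
  set η : ℝ := ε / (4 * (N * δ)) with hηdef
  have hη : 0 < η := by positivity
  classical
  set J : ℕ → Set ℝ := fun j => Set.Ico (j * δ) ((j + 1) * δ) with hJ
  set I : Finset ℕ := (Finset.range N).filter fun j => (Good z x n r ∩ J j).Nonempty with hI
  have ht : ∀ j : ℕ, ∃ t : ℝ, j ∈ I → t ∈ Good z x n r ∩ J j := by
    intro j
    by_cases hj : j ∈ I
    · obtain ⟨t, ht⟩ := (Finset.mem_filter.1 hj).2
      exact ⟨t, fun _ => ht⟩
    · exact ⟨0, fun h => absurd h hj⟩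
  choose t ht using ht
  have hlim : ∀ i : ℕ, ∃ L, i ∈ I → Tendsto (fun j => FF z x (ν j) (n, t i)) 𝒰 (𝓝 L) := by
    intro i
    by_cases hi : i ∈ I
    · obtain ⟨L, hL⟩ := ulim 𝒰 (fun j => FF z x (ν j) (n, t i)) (C / r) (fun j =>
        (FF_bound hu x n hr (ht i hi).1 (ν j)).trans (by gcongr; exact hC j))
      exact ⟨L, fun _ => hL⟩
    · exact ⟨0, fun h => absurd h hi⟩
  choose L hL using hlim
  have hev : ∀ᶠ j in (𝒰 : Filter ℕ), ∀ i ∈ I, |FF z x (ν j) (n, t i) - L i| < η / 2 := by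
    rw [Filter.eventually_all_finset]
    intro i hi
    have := (Metric.tendsto_nhds.1 (hL i hi)) (η / 2) (half_pos hη)
    simpa only [Real.dist_eq] using this
  refine ⟨_, hev, ?_⟩
  intro j hj k hk S hS hSG
  have hj' : ∀ i ∈ I, |FF z x (ν j) (n, t i) - L i| < η / 2 := hj
  have hk' : ∀ i ∈ I, |FF z x (ν k) (n, t i) - L i| < η / 2 := hk
  set ω := ν j - ν k with hω
  have hωC : freeNorm z ω ≤ 2 * C := by
    have := freeNorm_sub_le (z := z) (ν j) (ν k)
    linarith [hC j, hC k]
  have hti : ∀ i ∈ I, |FF z x ω (n, t i)| ≤ η := by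
    intro i hi
    rw [hω, FF_sub]
    have := abs_sub_le (FF z x (ν j) (n, t i)) (L i) (FF z x (ν k) (n, t i))
    rw [abs_sub_comm (L i)] at this
    linarith [hj' i hi, hk' i hi]
  have hs : ∀ i : ℕ, ∃ s : ℝ, i ∈ I → s ∈ Good z x n r ∩ J i ∧
      ∀ t ∈ Good z x n r ∩ J i, |FF z x ω (n, t)| ≤ |FF z x ω (n, s)| + η := by
    intro i
    by_cases hi : i ∈ I
    · obtain ⟨s, h1, h2⟩ := exists_near_max (z := z) x n ω _ (Finset.mem_filter.1 hi).2 hη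
      exact ⟨s, fun _ => ⟨h1, h2⟩⟩
    · exact ⟨0, fun h => absurd h hi⟩
  choose s hs using hs
  have hvar := variation_bound hu x n hr hδ hδr I s t (fun i hi => (hs i hi).1)
    (fun i hi => ht i hi) ω
  set b : ℝ → ℝ := fun v => ∑ i ∈ I, (J i).indicator (fun _ => |FF z x ω (n, s i)| + η) v with hb
  have hbi : ∀ i, Integrable ((J i).indicator (fun _ => |FF z x ω (n, s i)| + η)) volume := by
    intro i
    rw [integrable_indicator_iff measurableSet_Ico]
    exact integrableOn_const (by simp)
  have hbI : Integrable b volume := integrable_finsetSum _ fun i _ => hbi i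
  have hnn : ∀ i v, 0 ≤ (J i).indicator (fun _ => |FF z x ω (n, s i)| + η) v := fun i v =>
    Set.indicator_nonneg (fun _ _ => by positivity) v
  have hb0 : ∀ v, 0 ≤ b v := fun v => Finset.sum_nonneg fun i _ => hnn i v
  have hle : ∀ v ∈ S, |FF z x (ν j) (n, v) - FF z x (ν k) (n, v)| ≤ b v := by
    intro v hv
    rw [← FF_sub]
    have hvG := hSG hv
    set i := ⌊v / δ⌋₊ with hi
    have h0 : 0 ≤ v / δ := div_nonneg hvG.1.le hδ.le
    have hvJ : v ∈ J i := by
      constructor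
      · exact (le_div_iff₀ hδ).1 (Nat.floor_le h0)
      · exact (div_lt_iff₀ hδ).1 (Nat.lt_floor_add_one _)
    have hiI : i ∈ I := by
      rw [hI, Finset.mem_filter, Finset.mem_range]
      refine ⟨?_, v, hvG, hvJ⟩
      have : (i : ℝ) < N := lt_of_mul_lt_mul_right
        (hvJ.1.trans_lt (hvG.2.1.trans_lt hN')) hδ.le
      exact_mod_cast this
    refine ((hs i hiI).2 v ⟨hvG, hvJ⟩).trans ?_
    refine le_trans ?_ (Finset.single_le_sum (f := fun i =>
      (J i).indicator (fun _ => |FF z x ω (n, s i)| + η) v) (fun i _ => hnn i v) hiI)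
    rw [Set.indicator_of_mem hvJ]
  have h1 : ∫ v in S, |FF z x (ν j) (n, v) - FF z x (ν k) (n, v)| ≤ ∫ v in S, b v := by
    apply integral_mono_of_nonneg (Eventually.of_forall fun v => abs_nonneg _) hbI.integrableOn
    filter_upwards [ae_restrict_mem hS] with v hv
    exact hle v hv
  have h2 : ∫ v in S, b v ≤ ∫ v, b v :=
    setIntegral_le_integral hbI (Eventually.of_forall hb0)
  have h3 : ∫ v, b v = ∑ i ∈ I, δ * (|FF z x ω (n, s i)| + η) := by
    rw [hb, integral_finsetSum _ fun i _ => hbi i]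
    apply Finset.sum_congr rfl
    intro i _
    rw [integral_indicator measurableSet_Ico, setIntegral_const, measureReal_def, Real.volume_Ico,
      ENNReal.toReal_ofReal (by linarith), smul_eq_mul]
    ring
  have h4 : ∑ i ∈ I, δ * (|FF z x ω (n, s i)| + η) ≤
      ∑ i ∈ I, (δ * |FF z x ω (n, s i) - FF z x ω (n, t i)| + δ * (2 * η)) := by
    apply Finset.sum_le_sum
    intro i hi
    have a := hti i hi
    have b := abs_sub_abs_le_abs_sub (FF z x ω (n, s i)) (FF z x ω (n, t i))
    rw [← mul_add]
    apply mul_le_mul_of_nonneg_left _ hδ.le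
    linarith
  have hcard : (I.card : ℝ) ≤ N := by
    have := Finset.card_filter_le (Finset.range N) fun j => (Good z x n r ∩ J j).Nonempty
    rw [Finset.card_range] at this
    exact_mod_cast this
  rw [Finset.sum_add_distrib, Finset.sum_const, nsmul_eq_mul] at h4
  have h5 : δ * ∑ i ∈ I, |FF z x ω (n, s i) - FF z x ω (n, t i)| ≤ ε / 2 := by
    refine le_trans ?_ hδε
    apply mul_le_mul_of_nonneg_left _ hδ.le
    refine hvar.trans ?_
    gcongr
  have h6 : (I.card : ℝ) * (δ * (2 * η)) ≤ ε / 2 := by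
    have e : (N : ℝ) * (δ * (2 * η)) = ε / 2 := by
      have hN0 : (N : ℝ) ≠ 0 := by rintro h; rw [h] at hNpos; simp at hNpos
      have hd0 := hδ.ne'
      rw [hηdef]; field_simp; try ring
    rw [← e]
    gcongr
  rw [Finset.mul_sum] at h5
  linarith

/-- The exhausting sets. -/
def AA (z : M) (x : ℕ → M) (m : ℕ) : Set (ℕ × ℝ) :=
  {p | p.1 < m ∧ ∀ y, 1 / ((m : ℝ) + 1) ≤ EE z x p.1 y p.2}

lemma measSet_EE (x : ℕ → M) (n : ℕ) (r : ℝ) : MeasurableSet {t : ℝ | ∀ y, r ≤ EE z x n y t} := by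
  have : {t : ℝ | ∀ y, r ≤ EE z x n y t} = ⋂ y, {t | r ≤ EE z x n y t} := by
    ext t; simp
  rw [this]
  apply IsClosed.measurableSet
  apply isClosed_iInter
  intro y
  apply isClosed_le continuous_const
  unfold EE
  fun_prop

lemma measSet_AA (x : ℕ → M) (m : ℕ) : MeasurableSet (AA z x m) := by
  apply measSet_nat_prod
  intro n
  by_cases h : n < m
  · convert measSet_EE (z := z) x n (1 / ((m : ℝ) + 1)) using 1
    ext t; simp [AA, h]
  · convert MeasurableSet.empty using 1
    ext t; simp [AA, h]

lemma mono_AA (x : ℕ → M) : Monotone (AA z x) := by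
  intro a b hab p hp
  refine ⟨hp.1.trans_le hab, fun y => le_trans ?_ (hp.2 y)⟩
  have : (a : ℝ) ≤ b := by exact_mod_cast hab
  gcongr

lemma AA_cauchy (hu : UGp z) (x : ℕ → M) (ν : ℕ → M →₀ ℝ) (C : ℝ)
    (hC : ∀ j, freeNorm z (ν j) ≤ C) (𝒰 : Ultrafilter ℕ) (m : ℕ) (ε : ℝ) (hε : 0 < ε) :
    ∃ U ∈ 𝒰, ∀ j ∈ U, ∀ k ∈ U,
      ∫ p in AA z x m, |FF z x (ν j) p - FF z x (ν k) p| ∂(lam z x) ≤ ε := by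
  have hr : (0 : ℝ) < 1 / ((m : ℝ) + 1) := by positivity
  have hε' : 0 < ε / (m + 1) := by positivity
  choose U hU hU' using fun n => slice_cauchy hu x n hr ν C hC 𝒰 (ε / (m + 1)) hε'
  refine ⟨⋂ n ∈ Finset.range m, U n, (Filter.biInter_finset_mem _).2 fun n _ => hU n, ?_⟩
  intro j hj k hk
  simp only [Set.mem_iInter] at hj hk
  set S : ℕ → Set ℝ := fun n => {t | (n, t) ∈ AA z x m ∩ Om z x} with hS
  have hSm : ∀ n, MeasurableSet (S n) := fun n =>
    measurable_prodMk_left ((measSet_AA x m).inter (measSet_Om z x))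
  have hset : AA z x m ∩ Om z x = ⋃ n ∈ Finset.range m, ({n} : Set ℕ) ×ˢ S n := by
    ext ⟨n, t⟩
    simp only [Set.mem_iUnion, Set.mem_prod, Set.mem_singleton_iff, Finset.mem_range, hS]
    constructor
    · intro h
      exact ⟨n, h.1.1, rfl, h⟩
    · rintro ⟨n', _, rfl, h⟩
      exact h
  have hint : Integrable (fun p => |FF z x (ν j) p - FF z x (ν k) p|) (lam z x) :=
    ((integrable_FF hu x (ν j)).sub (integrable_FF hu x (ν k))).abs
  have hint' := hint.integrableOn (s := AA z x m)
  rw [IntegrableOn, lam, Measure.restrict_restrict (measSet_AA x m)] at hint'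
  rw [lam, Measure.restrict_restrict (measSet_AA x m), hset, integral_biUnion_finset]
  · calc _ ≤ ∑ n ∈ Finset.range m, ε / (m + 1) := by
          apply Finset.sum_le_sum
          intro n hn
          rw [← Measure.prod_restrict, Measure.restrict_singleton,
            Measure.count_singleton, one_smul, Measure.dirac_prod,
            (measurableEmbedding_prodMk_left n).integral_map]
          refine hU' n j (hj n hn) k (hk n hn) (S n) (hSm n) ?_
          intro t ht
          exact ⟨ht.2.1, ht.2.2.1, ht.1.2⟩
      _ ≤ ε := by
          rw [Finset.sum_const, Finset.card_range, nsmul_eq_mul, mul_div_assoc',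
            div_le_iff₀ (by positivity)]
          nlinarith
  · exact fun n _ => (measurableSet_singleton n).prod (hSm n)
  · intro a _ b _ hab
    rw [Function.onFun, Set.disjoint_left]
    rintro ⟨c, t⟩ ⟨h1, _⟩ ⟨h2, _⟩
    exact hab (h1.symm.trans h2)
  · intro n hn
    have hsub : ({n} : Set ℕ) ×ˢ S n ⊆ AA z x m ∩ Om z x := by
      rw [hset]
      exact Set.subset_biUnion_of_mem (u := fun n => ({n} : Set ℕ) ×ˢ S n) hn
    exact IntegrableOn.mono_set (t := AA z x m ∩ Om z x) hint' hsub

lemma EE_nonneg (x : ℕ → M) (n : ℕ) (y : M) (t : ℝ) : 0 ≤ EE z x n y t := by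
  unfold EE
  linarith [gp_le_left z y (x n), abs_nonneg (t - gp z y (x n))]

lemma dist_le_EE (hu : UGp z) (x : ℕ → M) (n : ℕ) (y y' : M) (t : ℝ) :
    dist y y' ≤ EE z x n y t + EE z x n y' t := by
  have h := hu y (x n) y'
  rw [gp_comm z (x n) y'] at h
  rw [dist_eq_gp z y y']
  unfold EE
  have a := neg_abs_le (t - gp z y (x n))
  have a' := le_abs_self (t - gp z y (x n))
  have b := neg_abs_le (t - gp z y' (x n))
  have b' := le_abs_self (t - gp z y' (x n))
  rcases min_le_iff.1 h with h | h <;> linarith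

lemma null_bad [CompleteSpace M] (hu : UGp z) (hp1u : PurelyOneUnrectifiable M) (x : ℕ → M)
    (n : ℕ) : volume {t : ℝ | ∀ m : ℕ, ∃ y, EE z x n y t < 1 / ((m : ℝ) + 1)} = 0 := by
  set K := {t : ℝ | ∀ m : ℕ, ∃ y, EE z x n y t < 1 / ((m : ℝ) + 1)} with hK
  have hKm : MeasurableSet K := by
    have : K = ⋂ m : ℕ, {t : ℝ | ∀ y, 1 / ((m : ℝ) + 1) ≤ EE z x n y t}ᶜ := by
      ext t
      simp [hK]
    rw [this]
    exact MeasurableSet.iInter fun m => (measSet_EE x n _).compl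
  have hφ : ∀ t : ℝ, ∃ y : M, t ∈ K → t = dist z y ∧ t = gp z y (x n) := by
    intro t
    by_cases ht : t ∈ K
    · choose y hy using (show ∀ m : ℕ, ∃ y, EE z x n y t < 1 / ((m : ℝ) + 1) from ht)
      have hlim : Tendsto (fun m : ℕ => EE z x n (y m) t) atTop (𝓝 0) :=
        squeeze_zero (fun m => EE_nonneg x n _ t) (fun m => (hy m).le)
          tendsto_one_div_add_atTop_nhds_zero_nat
      have hcau : CauchySeq y := by
        apply cauchySeq_of_le_tendsto_0 (fun N : ℕ => 2 * (1 / ((N : ℝ) + 1)))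
        · intro a b N ha hb
          have h1 : EE z x n (y a) t ≤ 1 / ((N : ℝ) + 1) := (hy a).le.trans (by gcongr)
          have h2 : EE z x n (y b) t ≤ 1 / ((N : ℝ) + 1) := (hy b).le.trans (by gcongr)
          linarith [dist_le_EE hu x n (y a) (y b) t]
        · simpa using tendsto_one_div_add_atTop_nhds_zero_nat (𝕜 := ℝ).const_mul 2
      obtain ⟨w, hw⟩ := cauchySeq_tendsto_of_complete hcau
      have hcont : Continuous fun y => EE z x n y t := by
        unfold EE gp; fun_prop
      have h0 : EE z x n w t = 0 := tendsto_nhds_unique ((hcont.tendsto w).comp hw) hlim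
      refine ⟨w, fun _ => ?_⟩
      unfold EE at h0
      have a := gp_le_left z w (x n)
      have b := abs_nonneg (t - gp z w (x n))
      have c : |t - gp z w (x n)| = 0 := by linarith
      have d := abs_eq_zero.1 c
      constructor <;> linarith
    · exact ⟨z, fun h => absurd h ht⟩
  choose φ hφ using hφ
  by_contra hne
  have hpos : 0 < volume K := pos_iff_ne_zero.2 hne
  obtain ⟨K', hK', hK'c, hK'p⟩ := hKm.exists_lt_isCompact hpos
  apply hp1u
  refine ⟨K', hK'c, hK'p, 1, one_pos, φ, ?_⟩
  intro s hs t ht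
  obtain ⟨s1, s2⟩ := hφ s (hK' hs)
  obtain ⟨t1, t2⟩ := hφ t (hK' ht)
  have h := hu (φ s) (x n) (φ t)
  rw [gp_comm z (x n), ← s2, ← t2] at h
  have a := gp_le_left z (φ s) (φ t)
  have b := gp_le_right z (φ s) (φ t)
  have hd : dist (φ s) (φ t) = |s - t| := by
    rw [dist_eq_gp z, ← s1, ← t1]
    rw [← s1] at a
    rw [← t1] at b
    rcases le_total s t with hst | hst
    · rw [min_eq_left hst] at h
      rw [abs_of_nonpos (by linarith)]
      linarith
    · rw [min_eq_right hst] at h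
      rw [abs_of_nonneg (by linarith)]
      linarith
  rw [hd]
  simp

lemma AA_cover [CompleteSpace M] (hu : UGp z) (hp1u : PurelyOneUnrectifiable M) (x : ℕ → M) :
    ∀ᵐ p ∂(lam z x), ∃ m, p ∈ AA z x m := by
  apply ae_restrict_of_ae
  rw [ae_iff]
  apply measure_mono_null (t := ⋃ n : ℕ, ({n} : Set ℕ) ×ˢ
    {t : ℝ | ∀ m : ℕ, ∃ y, EE z x n y t < 1 / ((m : ℝ) + 1)})
  · rintro ⟨n, t⟩ hp
    rw [Set.mem_iUnion]
    refine ⟨n, rfl, ?_⟩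
    change ∀ m : ℕ, ∃ y, EE z x n y t < 1 / ((m : ℝ) + 1)
    by_contra hc
    push Not at hc
    obtain ⟨m, hm⟩ := hc
    apply hp
    refine ⟨max m (n + 1), lt_of_lt_of_le (Nat.lt_succ_self n) (le_max_right _ _), fun y => ?_⟩
    refine le_trans ?_ (hm y)
    have : (m : ℝ) ≤ (max m (n + 1) : ℕ) := by exact_mod_cast le_max_left _ _
    gcongr
  · rw [measure_iUnion_null_iff]
    intro n
    rw [Measure.prod_prod, null_bad hu hp1u x n, mul_zero]

lemma main_P [CompleteSpace M] (hu : UGp z) (hp1u : PurelyOneUnrectifiable M)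
    (ν : ℕ → M →₀ ℝ) (C c : ℝ) (hC : ∀ j, freeNorm z (ν j) ≤ C) (hc : ∀ j, c ≤ freeNorm z (ν j))
    (ε : ℝ) (hε : 0 < ε) :
    ∃ f : M → ℝ, f z = 0 ∧ LipschitzWith 1 f ∧ ∀ N : ℕ, ∃ j ≥ N,
      c - 10 * ε ≤ ∑ y ∈ (ν j).support, ν j y * f y := by
  have hcount : (⋃ j, ((ν j).support : Set M)).Countable :=
    Set.countable_iUnion fun j => (ν j).support.countable_toSet
  obtain ⟨x, hx0, hx⟩ : ∃ x : ℕ → M, x 0 = z ∧ ∀ j, ∀ y ∈ (ν j).support, ∃ m, x m = y := by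
    obtain ⟨x', hx'⟩ := (hcount.insert z).exists_eq_range (Set.insert_nonempty _ _)
    refine ⟨fun n => Nat.casesOn n z x', rfl, fun j y hy => ?_⟩
    have : y ∈ Set.range x' := by
      rw [← hx']
      exact Set.mem_insert_of_mem _ (Set.mem_iUnion.2 ⟨j, hy⟩)
    obtain ⟨m, hm⟩ := this
    exact ⟨m + 1, hm⟩
  obtain ⟨g, hg, hg1, h⟩ := hump (lam z x) (fun j => FF z x (ν j)) (fun j => measurable_FF x _)
    (fun j => integrable_FF hu x _) C c (fun j => (integral_FF_le hu x _).trans (hC j))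
    (fun j => (hc j).trans (freeNorm_le _ fun f hz hf => pair_le hu x hx0 _ (hx j) hf hz))
    (AA z x) (measSet_AA x) (mono_AA x) (AA_cover hu hp1u x) (Filter.hyperfilter ℕ)
    (by rw [← Nat.cofinite_eq_atTop]; exact Filter.hyperfilter_le_cofinite)
    (fun m ε hε => AA_cauchy hu x ν C hC _ m ε hε) ε hε
  refine ⟨fg z x g, fg_base x g, fg_lip hu x hg hg1, fun N => ?_⟩
  obtain ⟨j, hj, hj'⟩ := h N
  refine ⟨j, hj, ?_⟩
  rw [pair_fg hu x _ hg hg1]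
  exact hj'

end fin2

theorem freeSpace_one_schur_of_zeroHyperbolic_purelyOneUnrectifiable
    {M : Type*} [MetricSpace M] [CompleteSpace M] (z : M)
    (hhyp : ∀ x y u v : M,
      dist x y + dist u v ≤ max (dist x u + dist y v) (dist x v + dist y u))
    (hp1u : PurelyOneUnrectifiable M)
    (μ : ℕ → M →₀ ℝ) (hbdd : ∃ C : ℝ, ∀ n, freeNorm z (μ n) ≤ C) :
    seqCa z μ ≤ seqDe z μ := by
  obtain ⟨C, hC⟩ := hbdd
  have hu := ugp_of_hyp z hhyp
  have hsub : ∀ k l, freeNorm z (μ k - μ l) ≤ 2 * C := fun k l => by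
    linarith [freeNorm_sub_le (z := z) (μ k) (μ l), hC k, hC l]
  have hC0 : 0 ≤ 2 * C := (freeNorm_nonneg _).trans (hsub 0 0)
  -- lower bounds for the seqCa set
  have hcabdd : BddBelow {t | ∃ n : ℕ, t = sSup {s | ∃ k, n ≤ k ∧ ∃ l, n ≤ l ∧
      s = freeNorm z (μ k - μ l)}} := by
    refine ⟨0, ?_⟩
    rintro _ ⟨n, rfl⟩
    apply Real.sSup_nonneg
    rintro _ ⟨k, _, l, _, rfl⟩
    exact freeNorm_nonneg _
  have hdebdd : BddAbove {t | ∃ f : M → ℝ, f z = 0 ∧ LipschitzWith 1 f ∧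
      t = sInf {u | ∃ n : ℕ, u = sSup {s | ∃ k, n ≤ k ∧ ∃ l, n ≤ l ∧
      s = |∑ x ∈ (μ k - μ l).support, (μ k - μ l) x * f x|}}} := by
    refine ⟨2 * C, ?_⟩
    rintro _ ⟨f, hz, hf, rfl⟩
    refine le_trans (csInf_le (a := sSup {s | ∃ k, 0 ≤ k ∧ ∃ l, 0 ≤ l ∧
      s = |∑ x ∈ (μ k - μ l).support, (μ k - μ l) x * f x|}) ⟨0, ?_⟩ ⟨0, rfl⟩) ?_
    · rintro _ ⟨n, rfl⟩
      apply Real.sSup_nonneg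
      rintro _ ⟨k, _, l, _, rfl⟩
      exact abs_nonneg _
    · apply Real.sSup_le _ hC0
      rintro _ ⟨k, _, l, _, rfl⟩
      exact (abs_le_freeNorm _ hf hz).trans (hsub k l)
  apply le_of_forall_pos_le_add
  intro ε' hε'
  set ε := ε' / 11 with hεdef
  have hε : 0 < ε := by positivity
  have hch : ∀ n : ℕ, ∃ k, n ≤ k ∧ ∃ l, n ≤ l ∧ seqCa z μ - ε ≤ freeNorm z (μ k - μ l) := by
    intro n
    have h1 : seqCa z μ ≤ sSup {s | ∃ k, n ≤ k ∧ ∃ l, n ≤ l ∧ s = freeNorm z (μ k - μ l)} :=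
      csInf_le hcabdd ⟨n, rfl⟩
    obtain ⟨_, ⟨k, hk, l, hl, rfl⟩, h⟩ := exists_lt_of_lt_csSup
      (s := {s | ∃ k, n ≤ k ∧ ∃ l, n ≤ l ∧ s = freeNorm z (μ k - μ l)})
      ⟨_, n, le_rfl, n, le_rfl, rfl⟩ (lt_of_lt_of_le (sub_lt_self _ hε) h1)
    exact ⟨k, hk, l, hl, h.le⟩
  choose k hk l hl hkl using hch
  obtain ⟨f, hz, hf, hN⟩ := main_P hu hp1u (fun n => μ (k n) - μ (l n)) (2 * C)
    (seqCa z μ - ε) (fun n => hsub _ _) hkl ε hε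
  have hfin : seqCa z μ - ε - 10 * ε ≤ sInf {u | ∃ n : ℕ, u = sSup {s | ∃ k, n ≤ k ∧ ∃ l, n ≤ l ∧
      s = |∑ x ∈ (μ k - μ l).support, (μ k - μ l) x * f x|}} := by
    refine le_csInf ⟨_, ⟨0, rfl⟩⟩ ?_
    rintro _ ⟨n, rfl⟩
    obtain ⟨j, hj, hj'⟩ := hN n
    refine (hj'.trans (le_abs_self _)).trans ?_
    apply le_csSup
    · refine ⟨2 * C, ?_⟩
      rintro _ ⟨k, _, l, _, rfl⟩
      exact (abs_le_freeNorm _ hf hz).trans (hsub k l)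
    · exact ⟨k j, le_trans hj (hk j), l j, le_trans hj (hl j), rfl⟩
  have hde := le_csSup hdebdd ⟨f, hz, hf, rfl⟩
  have : seqCa z μ - ε - 10 * ε ≤ seqDe z μ := hfin.trans hde
  linarith
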